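/- Let (X,d) be a complete and locally compact length space satisfying the shooting property and let G be a subgroup of Isom(X,d) acting properly on X. Then the induced isometric action of H[G] = {H[g] : g ∈ G} on (Σ(X), d_H), where H[g](K) = g(K), is proper: for every closed ball B̄_r(x) ∈ Σ(X) there exists R > 0 such that the set of H[g] ∈ H[G] for which H[g](B^H_R(B̄_r(x))) ∩ B^H_R(B̄_r(x)) ≠ ∅ is finite, where B^H_R(K) denotes the open ball of radius R about K in (Σ(X), d_H). -/

import Mathlib

/-!
The point is the inequality `d(z, x) ≤ d_H(B̄_t(z), B̄_s(x))`, valid for any two closed balls in a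
space with the shooting property. If `t ≤ s`, shooting from `z` through `x` gives a point
`p ∈ B̄_s(x)` with `d(z, p) = d(z, x) + s`, and `p` is then at distance at least
`d(z, x) + s - t ≥ d(z, x)` from every point of `B̄_t(z)`; the case `s ≤ t` is symmetric.

Consequently the radius `R` provided by properness at `x` also works at `B̄_r(x)`: if both `B̄_t(z)`
and `g(B̄_t(z)) = B̄_t(g z)` are `d_H`-closer than `R` to `B̄_r(x)`, then `z` and `g z` both lie in
`B_R(x)`, so `g` belongs to the finite set attached to `B_R(x)`.
-/

/-- A metric space is a *length space* if the distance between any two points equals the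
infimum of the lengths of continuous paths joining them. -/
def IsLengthSpace (X : Type*) [MetricSpace X] : Prop :=
  ∀ x y : X, edist x y = ⨅ γ : Path x y, eVariationOn (fun t => γ t) Set.univ

/-- A point `x` satisfies the *shooting property* if for every `r > 0` and `y ≠ x` there is a
point `p` in the boundary of `B̄_r(x)` and a geodesic segment `γ : [0, d(x,y)+r] → X`
parameterized by arc length with `γ(0) = y`, `γ(d(x,y)) = x` and `γ(d(x,y)+r) = p`. -/
def ShootingAt {X : Type*} [MetricSpace X] (x : X) : Prop :=
  ∀ r : ℝ, 0 < r → ∀ y : X, y ≠ x →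
    ∃ p ∈ frontier (Metric.closedBall x r), ∃ γ : ℝ → X,
      γ 0 = y ∧ γ (dist x y) = x ∧ γ (dist x y + r) = p ∧
      ∀ u ∈ Set.Icc (0:ℝ) (dist x y + r), ∀ v ∈ Set.Icc (0:ℝ) (dist x y + r),
        dist (γ u) (γ v) = |u - v|

/-- A subset of `X` is an element of `Σ(X)` if it is a closed ball. -/
def IsBall {X : Type*} [MetricSpace X] (A : Set X) : Prop :=
  ∃ (z : X) (t : ℝ), 0 ≤ t ∧ A = Metric.closedBall z t

lemma exists_far_point_of_shootingAt {X : Type*} [MetricSpace X] {x z : X} (hx : ShootingAt x)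
    (hne : z ≠ x) {s : ℝ} (hs : 0 ≤ s) :
    ∃ p ∈ Metric.closedBall x s, dist z p = dist z x + s := by
  rcases hs.eq_or_lt with rfl | hs'
  · exact ⟨x, by simp, by simp⟩
  · obtain ⟨p, -, γ, h0, h1, h2, hγ⟩ := hx s hs' z hne
    have hd : 0 ≤ dist x z := dist_nonneg
    refine ⟨p, ?_, ?_⟩
    · have h := hγ (dist x z + s) ⟨by linarith, le_rfl⟩ (dist x z) ⟨hd, by linarith⟩
      rw [h1, h2, add_sub_cancel_left, abs_of_pos hs'] at h
      exact h.le
    · have h := hγ 0 ⟨le_rfl, by linarith⟩ (dist x z + s) ⟨by linarith, le_rfl⟩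
      rw [h0, h2, zero_sub, abs_neg, abs_of_nonneg (by linarith)] at h
      rw [h, dist_comm x z]

lemma dist_lt_of_hausdorffDist_lt_of_le {X : Type*} [MetricSpace X] {x z : X}
    (hx : ShootingAt x) {s t R : ℝ} (ht : 0 ≤ t) (hts : t ≤ s) (hR : 0 < R)
    (h : Metric.hausdorffDist (Metric.closedBall z t) (Metric.closedBall x s) < R) :
    dist z x < R := by
  rcases eq_or_ne z x with rfl | hne
  · simpa using hR
  obtain ⟨p, hp, hzp⟩ := exists_far_point_of_shootingAt hx hne (ht.trans hts)
  -- Both balls are nonempty and bounded, so `hausdorffDist` is not the junk value `0`.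
  have hfin : Metric.hausdorffEDist (Metric.closedBall z t) (Metric.closedBall x s) ≠ ⊤ :=
    Metric.hausdorffEDist_ne_top_of_nonempty_of_bounded
      (Metric.nonempty_closedBall.2 ht) (Metric.nonempty_closedBall.2 (ht.trans hts))
      Metric.isBounded_closedBall Metric.isBounded_closedBall
  obtain ⟨q, hq, hqp⟩ := Metric.exists_dist_lt_of_hausdorffDist_lt' hp h hfin
  have hqz : dist z q ≤ t := by simpa [dist_comm] using hq
  have := dist_triangle z q p
  linarith

/-- In a space with the shooting property, the centres of two closed balls are no farther apart
than the balls are in the Hausdorff distance. -/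
lemma dist_lt_of_hausdorffDist_closedBall_lt {X : Type*} [MetricSpace X]
    (hshoot : ∀ x : X, ShootingAt x) {x z : X} {s t R : ℝ} (ht : 0 ≤ t) (hs : 0 ≤ s)
    (hR : 0 < R)
    (h : Metric.hausdorffDist (Metric.closedBall z t) (Metric.closedBall x s) < R) :
    dist z x < R := by
  rcases le_total t s with hts | hst
  · exact dist_lt_of_hausdorffDist_lt_of_le (hshoot x) ht hts hR h
  · rw [Metric.hausdorffDist_comm] at h
    rw [dist_comm]
    exact dist_lt_of_hausdorffDist_lt_of_le (hshoot z) hs hst hR h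

/-- Let `X` be a complete and locally compact length space satisfying the shooting property
and let `G ≤ Isom(X)` act properly on `X`: for each `x` there is `r > 0` such that
`{g ∈ G : g(B_r(x)) ∩ B_r(x) ≠ ∅}` is finite. Then the induced action of `H[G]` on
`(Σ(X), d_H)`, `H[g](K) = g(K)`, is proper: for every ball `B̄_r(x) ∈ Σ(X)` there is `R > 0`
such that the set of `g ∈ G` whose induced map moves the open `d_H`-ball
`B^H_R(B̄_r(x)) ⊆ Σ(X)` to a set meeting it is finite. -/
theorem proper_action_on_ball_space
    {X : Type*} [MetricSpace X] [CompleteSpace X] [LocallyCompactSpace X]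
    (hX : IsLengthSpace X) (hshoot : ∀ x : X, ShootingAt x)
    (G : Subgroup (X ≃ᵢ X))
    (hproper : ∀ x : X, ∃ r : ℝ, 0 < r ∧
      {g : X ≃ᵢ X | g ∈ G ∧ ((g '' Metric.ball x r) ∩ Metric.ball x r).Nonempty}.Finite) :
    ∀ (x : X) (rr : ℝ), 0 ≤ rr → ∃ R : ℝ, 0 < R ∧
      {g : X ≃ᵢ X | g ∈ G ∧ ∃ A : Set X, IsBall A ∧
        Metric.hausdorffDist A (Metric.closedBall x rr) < R ∧
        Metric.hausdorffDist (g '' A) (Metric.closedBall x rr) < R}.Finite := by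
  intro x rr hrr
  obtain ⟨R, hR, hfin⟩ := hproper x
  refine ⟨R, hR, hfin.subset ?_⟩
  rintro g ⟨hgG, A, ⟨z, t, ht, rfl⟩, hA, hgA⟩
  rw [IsometryEquiv.image_closedBall] at hgA
  exact ⟨hgG, g z,
    ⟨z, dist_lt_of_hausdorffDist_closedBall_lt hshoot ht hrr hR hA, rfl⟩,
    dist_lt_of_hausdorffDist_closedBall_lt hshoot ht hrr hR hgA⟩
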